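/- Let m ∈ ℕ and let φ: ℝ → ℝ satisfy ∫_ℝ φ(sin z / z) z^j dz = 0 for all j ∈ {1,…,m}, ∫_ℝ |φ(sin z / z)| |z|^{m+1} dz < ∞ and A := ∫_ℝ φ(sin z / z) dz ≠ 0. Let p ∈ L¹(ℝ^D) be a density of class C^{m+1} with all partial derivatives of order m+1 uniformly bounded. Then for every k ∈ ℝ^D, the generalized Fourier integral estimator p_R^φ(k) := (R^D / A^D) ∫_{ℝ^D} ∏_{j=1}^D φ( sin(R(y_j − k_j)) / (R(y_j − k_j)) ) p(y) dy converges to p(k) as R → ∞ (indeed |p_R^φ(k) − p(k)| ≤ C / R^{m+1} for a constant C independent of k and R). -/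

import Mathlib

/-!
Substituting `y = k + R⁻¹ z` turns the estimator into `A⁻ᴰ ∫ G(z) p(k + R⁻¹ z) dz`, where
`G(z) = ∏ φ(sin z_j / z_j)` is a product kernel with total mass `Aᴰ` (`pIntEst_eq`).
Expand `p` around `k` to order `m`. The term of degree `i` is a form in `z`; written out in
coordinates it is a sum of monomials `∏ z_j ^ α_j` with `|α| = i`, and by Fubini `G` integrates each
to a product of one-dimensional moments. For `1 ≤ i ≤ m` some `α_j` lies in `{1, …, m}`, so the
integral vanishes (`integral_kernel_mul_multilinear`), and only `p k` survives.
The Taylor remainder is at most `Md ‖z‖ ^ (m + 1) / R ^ (m + 1)` (`abs_sub_taylor_le`), and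
`|G| ‖z‖ ^ (m + 1)` is integrable since, for the sup norm, `‖z‖ ^ (m + 1) ≤ ∑ |z_j| ^ (m + 1)`
(`integrable_kernel_mul_norm_pow`). This gives the rate uniformly in `k`, hence the limit.
-/

open MeasureTheory Real Finset Filter

/-- `sin z / z`, with the convention that its value at `z = 0` is `1`. -/
noncomputable def sincLike (z : ℝ) : ℝ := if z = 0 then 1 else Real.sin z / z

/-- The generalized Fourier integral estimator at radius `R`:
`p_R^φ(k) = (R^D / A^D) ∫ Π_j φ(sin(R(y_j − k_j)) / (R(y_j − k_j))) p(y) dy`,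
with `A` passed explicitly. -/
noncomputable def pIntEst (D : ℕ) (φ : ℝ → ℝ) (A : ℝ) (p : (Fin D → ℝ) → ℝ)
    (R : ℝ) (k : Fin D → ℝ) : ℝ :=
  R ^ D / A ^ D *
    ∫ y : Fin D → ℝ, (∏ j : Fin D, φ (sincLike (R * (y j - k j)))) * p y

/-- Taylor's formula with the remainder bounded by the sup of the top derivative; the factor
`1 / (m + 1)!` is not kept. -/
lemma abs_sub_taylor_le {D m : ℕ} {p : (Fin D → ℝ) → ℝ} (hp : ContDiff ℝ (m + 1) p)
    {M : ℝ} (hM : ∀ x, ‖iteratedFDeriv ℝ (m + 1) p x‖ ≤ M) (x y : Fin D → ℝ) :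
    |p (x + y) - ∑ i ∈ range (m + 1), (i.factorial : ℝ)⁻¹ * iteratedFDeriv ℝ i p x (fun _ ↦ y)|
      ≤ M * ‖y‖ ^ (m + 1) := by
  have hM0 : 0 ≤ M := (norm_nonneg _).trans (hM x)
  have h := map_add_eq_sum_add_integral_iteratedFDeriv (f := p) (x := x) (y := y) (n := m)
    (fun t _ ↦ hp.contDiffAt)
  simp only [smul_eq_mul] at h
  rw [h, add_sub_cancel_left, abs_mul]
  have h1 : |((m.factorial : ℝ))⁻¹| ≤ 1 := by
    rw [abs_of_nonneg (by positivity)]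
    exact inv_le_one_of_one_le₀ (by exact_mod_cast m.factorial_pos)
  have h2 : |∫ t in (0 : ℝ)..1, (1 - t) ^ m * iteratedFDeriv ℝ (m + 1) p (x + t • y) (fun _ ↦ y)|
      ≤ M * ‖y‖ ^ (m + 1) := by
    have := intervalIntegral.norm_integral_le_of_norm_le_const (a := (0 : ℝ)) (b := 1)
      (C := M * ‖y‖ ^ (m + 1))
      (f := fun t ↦ (1 - t) ^ m * iteratedFDeriv ℝ (m + 1) p (x + t • y) (fun _ ↦ y)) ?_
    · simpa using this
    · intro t ht
      rw [Set.uIoc_of_le zero_le_one] at ht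
      rw [norm_mul]
      have ha : ‖(1 - t) ^ m‖ ≤ 1 := by
        rw [norm_pow, Real.norm_of_nonneg (by linarith [ht.2])]
        exact pow_le_one₀ (by linarith [ht.2]) (by linarith [ht.1])
      have hb : ‖iteratedFDeriv ℝ (m + 1) p (x + t • y) (fun _ ↦ y)‖ ≤ M * ‖y‖ ^ (m + 1) := by
        refine (ContinuousMultilinearMap.le_opNorm _ _).trans ?_
        simp only [prod_const, card_univ, Fintype.card_fin]
        gcongr
        exact hM _
      simpa using mul_le_mul ha hb (norm_nonneg _) zero_le_one
  simpa using mul_le_mul h1 h2 (abs_nonneg _) zero_le_one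

lemma integrable_mul_pow_of_le {K : ℝ → ℝ} {m : ℕ} (hK : Integrable K)
    (hKm : Integrable (fun z ↦ |K z| * |z| ^ (m + 1))) {j : ℕ} (hj : j ≤ m + 1) :
    Integrable (fun z ↦ K z * z ^ j) := by
  refine (hK.norm.add hKm).mono' (hK.1.mul (by fun_prop)) (ae_of_all _ fun z ↦ ?_)
  have h : |z| ^ j ≤ 1 + |z| ^ (m + 1) := by
    rcases le_total |z| 1 with h | h
    · linarith [pow_le_one₀ (abs_nonneg z) h (n := j), pow_nonneg (abs_nonneg z) (m + 1)]
    · linarith [pow_le_pow_right₀ h hj]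
  calc ‖K z * z ^ j‖ = |K z| * |z| ^ j := by simp
    _ ≤ |K z| * (1 + |z| ^ (m + 1)) := by gcongr
    _ = _ := by simp [mul_add]

/-- A form of degree `i` on the diagonal is a sum of monomials indexed by words
`r : Fin i → Fin D`, the letter `j` contributing the power `#{s | r s = j}` of `z j`. -/
lemma multilinear_diag_eq {D i : ℕ}
    (T : ContinuousMultilinearMap ℝ (fun _ : Fin i ↦ (Fin D → ℝ)) ℝ) (z : Fin D → ℝ) :
    T (fun _ ↦ z) = ∑ r : Fin i → Fin D,
      (∏ j, z j ^ #{s | r s = j}) * T (fun s ↦ Pi.single (r s) 1) := by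
  have hz : z = ∑ j, z j • (Pi.single j (1 : ℝ) : Fin D → ℝ) := by
    ext a; simp [Finset.sum_apply, Pi.single_apply]
  conv_lhs => rw [hz]
  rw [T.map_sum (fun _ j ↦ z j • (Pi.single j (1 : ℝ) : Fin D → ℝ))]
  refine sum_congr rfl fun r _ ↦ ?_
  rw [T.map_smul_univ (fun s ↦ z (r s)), smul_eq_mul, ← prod_fiberwise' univ r z]
  simp

/-- The product kernel integrates every form of degree `i ≤ m + 1`, and annihilates those with
`1 ≤ i ≤ m`: in each monomial some variable has an exponent between `1` and `m`. -/
lemma integral_kernel_mul_multilinear {D m : ℕ} {K : ℝ → ℝ} (hK : Integrable K)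
    (hKm : Integrable (fun z ↦ |K z| * |z| ^ (m + 1)))
    (hmom : ∀ j : ℕ, 1 ≤ j → j ≤ m → ∫ z : ℝ, K z * z ^ j = 0)
    {i : ℕ} (T : ContinuousMultilinearMap ℝ (fun _ : Fin i ↦ (Fin D → ℝ)) ℝ) (him : i ≤ m + 1) :
    Integrable (fun z : Fin D → ℝ ↦ (∏ j, K (z j)) * T (fun _ ↦ z)) ∧
      (1 ≤ i → i ≤ m → ∫ z : Fin D → ℝ, (∏ j, K (z j)) * T (fun _ ↦ z) = 0) := by
  have hexp : (fun z : Fin D → ℝ ↦ (∏ j, K (z j)) * T (fun _ ↦ z)) = fun z ↦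
      ∑ r : Fin i → Fin D, (∏ j, K (z j) * z j ^ #{s | r s = j}) *
        T (fun s ↦ Pi.single (r s) 1) := by
    ext z
    rw [multilinear_diag_eq, mul_sum]
    refine sum_congr rfl fun r _ ↦ ?_
    rw [prod_mul_distrib, mul_assoc]
  have hcard (r : Fin i → Fin D) (j : Fin D) : #{s | r s = j} ≤ i := by
    simpa using card_le_univ ({s | r s = j} : Finset (Fin i))
  have hint (r : Fin i → Fin D) : Integrable (fun z : Fin D → ℝ ↦
      (∏ j, K (z j) * z j ^ #{s | r s = j}) * T (fun s ↦ Pi.single (r s) 1)) :=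
    (Integrable.fintype_prod (f := fun j z ↦ K z * z ^ #{s | r s = j}) fun j ↦
      integrable_mul_pow_of_le hK hKm ((hcard r j).trans him)).mul_const _
  rw [hexp]
  refine ⟨integrable_finsetSum _ fun r _ ↦ hint r, fun h1 hm ↦ ?_⟩
  rw [integral_finsetSum _ fun r _ ↦ hint r]
  refine sum_eq_zero fun r _ ↦ ?_
  rw [integral_mul_const,
    integral_fintype_prod_volume_eq_prod (fun j z ↦ K z * z ^ #{s | r s = j}),
    prod_eq_zero (mem_univ (r ⟨0, h1⟩)), zero_mul]
  refine hmom _ ?_ ((hcard r _).trans hm)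
  exact card_pos.2 ⟨⟨0, h1⟩, by simp⟩

lemma integrable_kernel_mul_norm_pow {D m : ℕ} {K : ℝ → ℝ} (hK : Integrable K)
    (hKm : Integrable (fun z ↦ |K z| * |z| ^ (m + 1))) :
    Integrable (fun z : Fin D → ℝ ↦ |∏ j, K (z j)| * ‖z‖ ^ (m + 1)) := by
  have hint (i : Fin D) : Integrable (fun z : Fin D → ℝ ↦
      ∏ j, |K (z j)| * |z j| ^ (if j = i then m + 1 else 0)) := by
    refine Integrable.fintype_prod
      (f := fun j z ↦ |K z| * |z| ^ (if j = i then m + 1 else 0)) fun j ↦ ?_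
    split_ifs
    · exact hKm
    · simpa using hK.norm
  have hG : Integrable (fun z : Fin D → ℝ ↦ ∏ j, K (z j)) :=
    Integrable.fintype_prod (f := fun _ ↦ K) fun _ ↦ hK
  refine (integrable_finsetSum univ fun i _ ↦ hint i).mono' (hG.1.norm.mul (by fun_prop))
    (ae_of_all _ fun z ↦ ?_)
  have hsum : ‖z‖ ^ (m + 1) ≤ ∑ i, |z i| ^ (m + 1) := by
    rcases isEmpty_or_nonempty (Fin D) with h | h
    · simp [Subsingleton.elim z 0]
    · obtain ⟨i, hi⟩ := Finite.exists_max fun i ↦ ‖z i‖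
      have hzi : ‖z‖ ≤ |z i| := (pi_norm_le_iff_of_nonempty z).2 hi
      refine (pow_le_pow_left₀ (norm_nonneg z) hzi (m + 1)).trans ?_
      exact single_le_sum (f := fun i ↦ |z i| ^ (m + 1)) (fun i _ ↦ by positivity) (mem_univ i)
  rw [norm_mul, norm_pow, norm_norm, norm_abs_eq_norm, Real.norm_eq_abs]
  calc |∏ j, K (z j)| * ‖z‖ ^ (m + 1) ≤ |∏ j, K (z j)| * ∑ i, |z i| ^ (m + 1) := by gcongr
    _ = _ := by
        rw [mul_sum]
        refine sum_congr rfl fun i _ ↦ ?_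
        rw [prod_mul_distrib, abs_prod]
        simp only [pow_ite, pow_zero, prod_ite_eq', mem_univ, if_true]

/-- The substitution `y = k + R⁻¹ • z`. -/
lemma pIntEst_eq {D : ℕ} (φ : ℝ → ℝ) (A : ℝ) (p : (Fin D → ℝ) → ℝ) {R : ℝ} (hR : 0 < R)
    (k : Fin D → ℝ) :
    pIntEst D φ A p R k =
      (A ^ D)⁻¹ * ∫ z : Fin D → ℝ, (∏ j, φ (sincLike (z j))) * p (k + R⁻¹ • z) := by
  have h := Measure.integral_comp_inv_smul (volume : Measure (Fin D → ℝ))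
    (fun y ↦ (∏ j, φ (sincLike (R * y j))) * p (k + y)) R
  have h2 := integral_add_left_eq_self (μ := (volume : Measure (Fin D → ℝ)))
    (fun y ↦ (∏ j, φ (sincLike (R * (y j - k j)))) * p y) k
  simp only [Pi.add_apply, add_sub_cancel_left] at h2
  rw [h2] at h
  simp only [Pi.smul_apply, smul_eq_mul, mul_inv_cancel_left₀ hR.ne', Module.finrank_pi,
    Fintype.card_fin, abs_of_pos (pow_pos hR D)] at h
  rw [pIntEst, h]
  ring

/-- The quantitative estimate for a fixed centre and radius, with an explicit constant. -/
lemma abs_pIntEst_sub_le {D m : ℕ} {φ : ℝ → ℝ} {A : ℝ}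
    (hK : Integrable (fun z : ℝ => φ (sincLike z)))
    (hA : A = ∫ z : ℝ, φ (sincLike z)) (hA0 : A ≠ 0)
    (hmom : ∀ j : ℕ, 1 ≤ j → j ≤ m → ∫ z : ℝ, φ (sincLike z) * z ^ j = 0)
    (hKm : Integrable (fun z : ℝ => |φ (sincLike z)| * |z| ^ (m + 1)))
    {p : (Fin D → ℝ) → ℝ} (hp : ContDiff ℝ (m + 1) p)
    {M : ℝ} (hM : ∀ x, ‖iteratedFDeriv ℝ (m + 1) p x‖ ≤ M)
    (k : Fin D → ℝ) {R : ℝ} (hR : 0 < R) :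
    |pIntEst D φ A p R k - p k| ≤
      (|(A ^ D)⁻¹| * (M * ∫ z : Fin D → ℝ, |∏ j, φ (sincLike (z j))| * ‖z‖ ^ (m + 1)))
        / R ^ (m + 1) := by
  set G : (Fin D → ℝ) → ℝ := fun z ↦ ∏ j, φ (sincLike (z j)) with hGdef
  have hG : Integrable G := Integrable.fintype_prod (f := fun _ z ↦ φ (sincLike z)) fun _ ↦ hK
  have hGint : ∫ z, G z = A ^ D := by
    rw [hA, hGdef, integral_fintype_prod_volume_eq_pow (fun z ↦ φ (sincLike z)), Fintype.card_fin]
  set P : (Fin D → ℝ) → ℝ := fun z ↦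
    ∑ i ∈ range (m + 1), (i.factorial : ℝ)⁻¹ * iteratedFDeriv ℝ i p k (fun _ ↦ R⁻¹ • z) with hP
  have hterm (i : ℕ) (z : Fin D → ℝ) :
      G z * ((i.factorial : ℝ)⁻¹ * iteratedFDeriv ℝ i p k (fun _ ↦ R⁻¹ • z)) =
      ((i.factorial : ℝ)⁻¹ * R⁻¹ ^ i) * (G z * iteratedFDeriv ℝ i p k (fun _ ↦ z)) := by
    rw [ContinuousMultilinearMap.map_smul_univ _ (fun _ ↦ R⁻¹) (fun _ ↦ z)]
    simp only [prod_const, card_univ, Fintype.card_fin, smul_eq_mul]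
    ring
  have hGP : (fun z ↦ G z * P z) = fun z ↦ ∑ i ∈ range (m + 1),
      ((i.factorial : ℝ)⁻¹ * R⁻¹ ^ i) * (G z * iteratedFDeriv ℝ i p k (fun _ ↦ z)) := by
    ext z
    rw [hP, mul_sum]
    exact sum_congr rfl fun i _ ↦ hterm i z
  have hi (i : ℕ) (h : i ∈ range (m + 1)) : Integrable fun z ↦
      ((i.factorial : ℝ)⁻¹ * R⁻¹ ^ i) * (G z * iteratedFDeriv ℝ i p k (fun _ ↦ z)) :=
    (integral_kernel_mul_multilinear hK hKm hmom _ (mem_range.1 h).le).1.const_mul _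
  have hGPi : Integrable (fun z ↦ G z * P z) := by
    rw [hGP]
    exact integrable_finsetSum _ hi
  -- Only the constant term of the Taylor polynomial survives.
  have hGPint : ∫ z, G z * P z = A ^ D * p k := by
    rw [hGP, integral_finsetSum _ hi, sum_eq_single_of_mem 0 (by simp)]
    · simp [integral_mul_const, hGint]
    · intro i h h0
      rw [integral_const_mul, (integral_kernel_mul_multilinear hK hKm hmom _ (mem_range.1 h).le).2
        (Nat.one_le_iff_ne_zero.2 h0) (Nat.lt_succ_iff.1 (mem_range.1 h)), mul_zero]
  have hdom (z : Fin D → ℝ) : ‖G z * (p (k + R⁻¹ • z) - P z)‖ ≤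
      M / R ^ (m + 1) * (|G z| * ‖z‖ ^ (m + 1)) := by
    rw [norm_mul, Real.norm_eq_abs, Real.norm_eq_abs]
    calc _ ≤ |G z| * (M * ‖R⁻¹ • z‖ ^ (m + 1)) := by
          gcongr
          exact abs_sub_taylor_le hp hM k (R⁻¹ • z)
      _ = _ := by
          rw [norm_smul, Real.norm_of_nonneg (by positivity), mul_pow, inv_pow]
          ring
  have hnorm : Integrable fun z ↦ M / R ^ (m + 1) * (|G z| * ‖z‖ ^ (m + 1)) :=
    (integrable_kernel_mul_norm_pow hK hKm).const_mul _
  have hPcont : Continuous P := by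
    refine continuous_finsetSum _ fun i _ ↦ continuous_const.mul ?_
    exact (iteratedFDeriv ℝ i p k).cont.comp (by fun_prop)
  have hremi : Integrable fun z ↦ G z * (p (k + R⁻¹ • z) - P z) := by
    refine hnorm.mono' (hG.1.mul ?_) (ae_of_all _ hdom)
    have := hp.continuous
    exact Continuous.aestronglyMeasurable (by fun_prop)
  have hsplit : ∫ z, G z * p (k + R⁻¹ • z) =
      (∫ z, G z * (p (k + R⁻¹ • z) - P z)) + A ^ D * p k := by
    rw [← hGPint, ← integral_add hremi hGPi]
    congr 1
    ext z
    ring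
  have hbound := norm_integral_le_of_norm_le hnorm (ae_of_all _ hdom)
  rw [integral_const_mul, Real.norm_eq_abs] at hbound
  rw [pIntEst_eq φ A p hR k, hsplit, mul_add, inv_mul_cancel_left₀ (pow_ne_zero D hA0),
    add_sub_cancel_right, abs_mul, mul_div_assoc]
  refine mul_le_mul_of_nonneg_left (hbound.trans_eq ?_) (abs_nonneg _)
  ring

/-- generalized Fourier integral theorem, quantitative form:
`p_R^φ(k) → p(k)` as `R → ∞`, with rate `C / R^{m+1}` uniform in `k`. -/
theorem generalized_fourier_integral_estimator_converges
    (D m : ℕ) (hD : 0 < D)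
    (φ : ℝ → ℝ) (hφ_meas : Measurable φ)
    (A : ℝ) (hA_int : Integrable (fun z : ℝ => φ (sincLike z)))
    (hA_def : A = ∫ z : ℝ, φ (sincLike z)) (hA_ne : A ≠ 0)
    (hmom : ∀ j : ℕ, 1 ≤ j → j ≤ m → ∫ z : ℝ, φ (sincLike z) * z ^ j = 0)
    (habs : Integrable (fun z : ℝ => |φ (sincLike z)| * |z| ^ (m + 1)))
    (p : (Fin D → ℝ) → ℝ)
    (hp_meas : Measurable p) (hp_nonneg : ∀ x, 0 ≤ p x)
    (hp_int : Integrable p) (hp_one : ∫ x : Fin D → ℝ, p x = 1)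
    (hp_smooth : ContDiff ℝ (m + 1) p)
    (Md : ℝ) (hp_deriv : ∀ x, ‖iteratedFDeriv ℝ (m + 1) p x‖ ≤ Md) :
    (∀ k : Fin D → ℝ,
        Tendsto (fun R : ℝ => pIntEst D φ A p R k) atTop (nhds (p k))) ∧
      ∃ C : ℝ, 0 < C ∧ ∀ k : Fin D → ℝ, ∀ R : ℝ, 0 < R →
        |pIntEst D φ A p R k - p k| ≤ C / R ^ (m + 1) := by
  set C₀ : ℝ := |(A ^ D)⁻¹| *
    (Md * ∫ z : Fin D → ℝ, |∏ j, φ (sincLike (z j))| * ‖z‖ ^ (m + 1)) with hC₀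
  have hest (k : Fin D → ℝ) (R : ℝ) (hR : 0 < R) :
      |pIntEst D φ A p R k - p k| ≤ C₀ / R ^ (m + 1) :=
    abs_pIntEst_sub_le hA_int hA_def hA_ne hmom habs hp_smooth hp_deriv k hR
  constructor
  · intro k
    rw [tendsto_iff_norm_sub_tendsto_zero]
    refine squeeze_zero' (Eventually.of_forall fun _ ↦ norm_nonneg _)
      ((eventually_gt_atTop 0).mono fun R hR ↦ hest k R hR) ?_
    exact tendsto_const_nhds.div_atTop (tendsto_pow_atTop (Nat.succ_ne_zero m))
  · refine ⟨|C₀| + 1, by positivity, fun k R hR ↦ (hest k R hR).trans ?_⟩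
    gcongr
    linarith [le_abs_self C₀]
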